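/- Let q and t be real numbers with q > 1, t > 0, and q³·t² < 1. Then the double series ∑_{X≥1} ∑_{Y≥1} q^{3X + 2Y} · t^{3X + 2Y − min(X, 2Y)} converges and equals q⁵·t⁴·(1 − q³·t³ + q³·t² − q⁸·t⁷) / ((1 − q²·t²)·(1 − q³·t³)·(1 − q⁸·t⁶)). -/

import Mathlib

/-!
Since `X + 2Y - min(X, 2Y) = max(X, 2Y)`, the series is `∑ a ^ X * b ^ Y * c ^ max(X, 2Y)` with
`a = q³t²`, `b = q²` and `c = t`. More generally, for the weight `max(X, kY)`, cut the quadrant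
along the line `X = kY`. Moving along the line by `(k, 1)` multiplies the term by
`a ^ k * b * c ^ k`. The cone `kY < X` is free on `(k, 1)` and `(1, 0)`; the cone `X ≤ kY` is the
union of `k` translates of the free cone on `(k, 1)` and `(0, 1)`, one for each residue of `X - 1`
modulo `k`. Each free cone contributes a product of two geometric series.
-/

open Function

section LatticeCones

/-- The parametrization of the pairs `(X, Y)` with `kY < X` by the free cone on `(k, 1)` and
`(1, 0)`, with apex `(k + 1, 1)`. -/
def openConeMap (k : ℕ) (p : ℕ × ℕ) : ℕ+ × ℕ+ :=
  (Nat.succPNat (k * (p.1 + 1) + p.2), Nat.succPNat p.1)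

/-- The parametrization of the pairs `(X, Y)` with `X ≤ kY` by the `k` translates of the free cone
on `(k, 1)` and `(0, 1)`, with apexes `(r + 1, 1)` for `r < k`. -/
def closedConeMap (k : ℕ) (p : Fin k × ℕ × ℕ) : ℕ+ × ℕ+ :=
  (Nat.succPNat (k * p.2.1 + p.1), Nat.succPNat (p.2.1 + p.2.2))

theorem openConeMap_injective (k : ℕ) : Injective (openConeMap k) := by
  rintro ⟨m, j⟩ ⟨m', j'⟩ h
  simp only [openConeMap, Prod.mk.injEq, Nat.succPNat_inj] at h ⊢
  obtain ⟨hX, rfl⟩ := h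
  exact ⟨rfl, Nat.add_left_cancel hX⟩

theorem closedConeMap_injective (k : ℕ) : Injective (closedConeMap k) := by
  rintro ⟨r, m, j⟩ ⟨r', m', j'⟩ h
  simp only [closedConeMap, Prod.mk.injEq, Nat.succPNat_inj] at h ⊢
  obtain ⟨hX, hY⟩ := h
  have hm : m = m' := by
    simpa [Nat.mul_add_div r.pos, Nat.div_eq_of_lt] using congrArg (· / k) hX
  subst hm
  exact ⟨Fin.ext (Nat.add_left_cancel hX), rfl, Nat.add_left_cancel hY⟩

theorem range_openConeMap (k : ℕ) :
    Set.range (openConeMap k) = {p : ℕ+ × ℕ+ | k * (p.2 : ℕ) < p.1} := by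
  ext ⟨X, Y⟩
  constructor
  · rintro ⟨⟨m, j⟩, h⟩
    obtain ⟨rfl, rfl⟩ := Prod.mk.inj h
    simp only [Set.mem_ofPred_eq, Nat.succPNat_coe, Nat.succ_eq_add_one]
    lia
  · intro (h : k * (Y : ℕ) < X)
    refine ⟨(Y.natPred, X - k * Y - 1), Prod.ext (PNat.eq ?_) (PNat.succPNat_natPred Y)⟩
    simp only [openConeMap, Nat.succPNat_coe, Nat.succ_eq_add_one, PNat.natPred_add_one]
    lia

theorem range_closedConeMap (k : ℕ) :
    Set.range (closedConeMap k) = {p : ℕ+ × ℕ+ | (p.1 : ℕ) ≤ k * p.2} := by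
  ext ⟨X, Y⟩
  constructor
  · rintro ⟨⟨r, m, j⟩, h⟩
    obtain ⟨rfl, rfl⟩ := Prod.mk.inj h
    have hr : (r : ℕ) < k := r.isLt
    simp only [Set.mem_ofPred_eq, Nat.succPNat_coe, Nat.succ_eq_add_one]
    nlinarith [Nat.zero_le (k * j)]
  · intro (h : (X : ℕ) ≤ k * Y)
    have hk : 0 < k := Nat.pos_of_mul_pos_right (X.pos.trans_le h)
    have hX : X.natPred < Y * k := by
      rw [mul_comm, ← Nat.succ_le_iff, Nat.succ_eq_add_one, PNat.natPred_add_one]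
      exact h
    have hdiv : X.natPred / k < Y := (Nat.div_lt_iff_lt_mul hk).2 hX
    refine ⟨(⟨X.natPred % k, Nat.mod_lt _ hk⟩, X.natPred / k, Y.natPred - X.natPred / k),
      Prod.ext ?_ (PNat.eq ?_)⟩
    · simp only [closedConeMap, Nat.div_add_mod, PNat.succPNat_natPred]
    · have hY : Y.natPred + 1 = Y := PNat.natPred_add_one Y
      simp only [closedConeMap, Nat.succPNat_coe, Nat.succ_eq_add_one]
      lia

theorem isCompl_range_openConeMap_range_closedConeMap (k : ℕ) :
    IsCompl (Set.range (openConeMap k)) (Set.range (closedConeMap k)) := by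
  have hcompl : Set.range (closedConeMap k) = (Set.range (openConeMap k))ᶜ := by
    ext p
    simp only [range_openConeMap, range_closedConeMap, Set.mem_compl_iff, Set.mem_ofPred_eq, not_lt]
  exact hcompl ▸ isCompl_compl

end LatticeCones

section GeometricSeries

theorem hasSum_mul_of_summable_norm {ι κ R : Type*} [NormedRing R] {f : ι → R} {g : κ → R}
    {s u : R} (hf : HasSum f s) (hf_norm : Summable (‖f ·‖)) (hg : HasSum g u)
    (hg_norm : Summable (‖g ·‖)) : HasSum (fun p : ι × κ => f p.1 * g p.2) (s * u) :=
  hf.mul hg (summable_mul_of_summable_norm' hf_norm hf.summable hg_norm hg.summable)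

variable {K : Type*} [NormedDivisionRing K] {x y : K}

theorem hasSum_geometric_mul_geometric (hx : ‖x‖ < 1) (hy : ‖y‖ < 1) :
    HasSum (fun p : ℕ × ℕ => x ^ p.1 * y ^ p.2) ((1 - x)⁻¹ * (1 - y)⁻¹) :=
  hasSum_mul_of_summable_norm
    (hasSum_geometric_of_norm_lt_one hx) (summable_norm_geometric_of_norm_lt_one hx)
    (hasSum_geometric_of_norm_lt_one hy) (summable_norm_geometric_of_norm_lt_one hy)

theorem hasSum_fintype_mul_geometric_mul_geometric {ι : Type*} [Fintype ι] (w : ι → K)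
    (hx : ‖x‖ < 1) (hy : ‖y‖ < 1) :
    HasSum (fun p : ι × ℕ × ℕ => w p.1 * (x ^ p.2.1 * y ^ p.2.2))
      ((∑ i, w i) * ((1 - x)⁻¹ * (1 - y)⁻¹)) :=
  hasSum_mul_of_summable_norm (g := fun p : ℕ × ℕ => x ^ p.1 * y ^ p.2) (hasSum_fintype w)
    .of_finite (hasSum_geometric_mul_geometric hx hy)
    ((summable_norm_geometric_of_norm_lt_one hx).mul_norm
      (summable_norm_geometric_of_norm_lt_one hy))

end GeometricSeries

section MaxMonomial

/-- The term `a ^ X * b ^ Y * c ^ max(X, kY)` of the series, whose exponents are linear in `(X, Y)`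
on each of the two cones cut out by `X = kY`. -/
def maxMonomial {R : Type*} [Monoid R] (a b c : R) (k : ℕ) (p : ℕ+ × ℕ+) : R :=
  a ^ (p.1 : ℕ) * b ^ (p.2 : ℕ) * c ^ max (p.1 : ℕ) (k * p.2)

theorem maxMonomial_openConeMap {R : Type*} [CommSemiring R] (a b c : R) (k : ℕ) (p : ℕ × ℕ) :
    maxMonomial a b c k (openConeMap k p) =
      a ^ k * b * c ^ k * (a * c) * ((a ^ k * b * c ^ k) ^ p.1 * (a * c) ^ p.2) := by
  have hmax : max (k * (p.1 + 1) + p.2 + 1) (k * (p.1 + 1)) = k * (p.1 + 1) + p.2 + 1 := by lia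
  simp only [maxMonomial, openConeMap, Nat.succPNat_coe, Nat.succ_eq_add_one, hmax]
  ring

theorem maxMonomial_closedConeMap {R : Type*} [CommSemiring R] (a b c : R) (k : ℕ)
    (p : Fin k × ℕ × ℕ) :
    maxMonomial a b c k (closedConeMap k p) =
      a ^ (p.1 + 1 : ℕ) * (b * c ^ k) * ((a ^ k * b * c ^ k) ^ p.2.1 * (b * c ^ k) ^ p.2.2) := by
  have hmax : max (k * p.2.1 + p.1 + 1) (k * (p.2.1 + p.2.2 + 1)) = k * (p.2.1 + p.2.2 + 1) :=
    max_eq_right (by nlinarith [p.1.isLt, Nat.zero_le (k * p.2.2)])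
  simp only [maxMonomial, closedConeMap, Nat.succPNat_coe, Nat.succ_eq_add_one, hmax]
  ring

theorem hasSum_maxMonomial {K : Type*} [NormedField K] {a b c : K} {k : ℕ}
    (hdiag : ‖a ^ k * b * c ^ k‖ < 1) (hac : ‖a * c‖ < 1) (hbc : ‖b * c ^ k‖ < 1) :
    HasSum (maxMonomial a b c k)
      (a ^ k * b * c ^ k * (a * c) * ((1 - a ^ k * b * c ^ k)⁻¹ * (1 - a * c)⁻¹) +
        (∑ r : Fin k, a ^ (r + 1 : ℕ) * (b * c ^ k)) *
          ((1 - a ^ k * b * c ^ k)⁻¹ * (1 - b * c ^ k)⁻¹)) := by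
  have hopen := ((hasSum_geometric_mul_geometric hdiag hac).mul_left
    (a ^ k * b * c ^ k * (a * c))).congr_fun (maxMonomial_openConeMap a b c k)
  have hclosed := (hasSum_fintype_mul_geometric_mul_geometric
    (fun r : Fin k => a ^ (r + 1 : ℕ) * (b * c ^ k)) hdiag hbc).congr_fun
    (maxMonomial_closedConeMap a b c k)
  exact HasSum.add_isCompl (isCompl_range_openConeMap_range_closedConeMap k)
    (((openConeMap_injective k).hasSum_range_iff (f := maxMonomial a b c k)).2 hopen)
    (((closedConeMap_injective k).hasSum_range_iff (f := maxMonomial a b c k)).2 hclosed)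

end MaxMonomial

theorem zpow_mul_zpow_sub_min_eq_maxMonomial {K : Type*} [Field K] (q t : K) (p : ℕ+ × ℕ+) :
    q ^ (3 * ((p.1 : ℕ) : ℤ) + 2 * ((p.2 : ℕ) : ℤ)) *
        t ^ (3 * ((p.1 : ℕ) : ℤ) + 2 * ((p.2 : ℕ) : ℤ) -
          min ((p.1 : ℕ) : ℤ) (2 * ((p.2 : ℕ) : ℤ))) =
      maxMonomial (q ^ 3 * t ^ 2) (q ^ 2) t 2 p := by
  obtain ⟨X, Y⟩ := p
  have hq : 3 * ((X : ℕ) : ℤ) + 2 * ((Y : ℕ) : ℤ) = (3 * X + 2 * Y : ℕ) := by push_cast; rfl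
  have ht : 3 * ((X : ℕ) : ℤ) + 2 * ((Y : ℕ) : ℤ) - min ((X : ℕ) : ℤ) (2 * ((Y : ℕ) : ℤ)) =
      (2 * X + max (X : ℕ) (2 * Y) : ℕ) := by lia
  rw [ht, hq, zpow_natCast, zpow_natCast, maxMonomial]
  ring

theorem openCone_add_closedCone_eq {K : Type*} [Field K] {q t : K}
    (hdiag : 1 - q ^ 8 * t ^ 6 ≠ 0) (hac : 1 - q ^ 3 * t ^ 3 ≠ 0) (hbc : 1 - q ^ 2 * t ^ 2 ≠ 0) :
    q ^ 8 * t ^ 6 * (q ^ 3 * t ^ 3) * ((1 - q ^ 8 * t ^ 6)⁻¹ * (1 - q ^ 3 * t ^ 3)⁻¹) +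
        (∑ r : Fin 2, (q ^ 3 * t ^ 2) ^ (r + 1 : ℕ) * (q ^ 2 * t ^ 2)) *
          ((1 - q ^ 8 * t ^ 6)⁻¹ * (1 - q ^ 2 * t ^ 2)⁻¹) =
      q ^ 5 * t ^ 4 * (1 - q ^ 3 * t ^ 3 + q ^ 3 * t ^ 2 - q ^ 8 * t ^ 7) /
        ((1 - q ^ 2 * t ^ 2) * (1 - q ^ 3 * t ^ 3) * (1 - q ^ 8 * t ^ 6)) := by
  rw [Fin.sum_univ_two, Fin.val_zero, Fin.val_one]
  field_simp
  ring

theorem one_sub_ne_zero_of_norm_lt_one {R : Type*} [SeminormedRing R] [NormOneClass R] {x : R}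
    (hx : ‖x‖ < 1) : 1 - x ≠ 0 := by
  intro h
  rw [← sub_eq_zero.1 h, norm_one] at hx
  exact hx.false

theorem heisenberg_integral_I2_general {K : Type*} [NormedField K] {q t : K}
    (hqt : ‖q * t‖ < 1) (hqt₄₃ : ‖q ^ 4 * t ^ 3‖ < 1) :
    HasSum
      (fun p : ℕ+ × ℕ+ =>
        q ^ (3 * ((p.1 : ℕ) : ℤ) + 2 * ((p.2 : ℕ) : ℤ)) *
          t ^ (3 * ((p.1 : ℕ) : ℤ) + 2 * ((p.2 : ℕ) : ℤ) -
            min ((p.1 : ℕ) : ℤ) (2 * ((p.2 : ℕ) : ℤ))))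
      (q ^ 5 * t ^ 4 * (1 - q ^ 3 * t ^ 3 + q ^ 3 * t ^ 2 - q ^ 8 * t ^ 7) /
        ((1 - q ^ 2 * t ^ 2) * (1 - q ^ 3 * t ^ 3) * (1 - q ^ 8 * t ^ 6))) := by
  have hdiag : ‖q ^ 8 * t ^ 6‖ < 1 := by
    rw [show q ^ 8 * t ^ 6 = (q ^ 4 * t ^ 3) ^ 2 by ring, norm_pow]
    exact pow_lt_one₀ (norm_nonneg _) hqt₄₃ two_ne_zero
  have hac : ‖q ^ 3 * t ^ 3‖ < 1 := by
    rw [← mul_pow, norm_pow]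
    exact pow_lt_one₀ (norm_nonneg _) hqt three_ne_zero
  have hbc : ‖q ^ 2 * t ^ 2‖ < 1 := by
    rw [← mul_pow, norm_pow]
    exact pow_lt_one₀ (norm_nonneg _) hqt two_ne_zero
  have hdiag_eq : (q ^ 3 * t ^ 2) ^ 2 * q ^ 2 * t ^ 2 = q ^ 8 * t ^ 6 := by ring
  have hac_eq : q ^ 3 * t ^ 2 * t = q ^ 3 * t ^ 3 := by ring
  have hsum := hasSum_maxMonomial (a := q ^ 3 * t ^ 2) (b := q ^ 2) (c := t) (k := 2)
    (hdiag_eq ▸ hdiag) (hac_eq ▸ hac) hbc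
  rw [hdiag_eq, hac_eq, openCone_add_closedCone_eq (one_sub_ne_zero_of_norm_lt_one hdiag)
    (one_sub_ne_zero_of_norm_lt_one hac) (one_sub_ne_zero_of_norm_lt_one hbc)] at hsum
  exact hsum.congr_fun (zpow_mul_zpow_sub_min_eq_maxMonomial q t)

theorem norm_mul_lt_one_of_cube_mul_sq_lt_one {q t : ℝ} (hq : 1 ≤ q) (hqt : q ^ 3 * t ^ 2 < 1) :
    ‖q * t‖ < 1 := by
  rw [Real.norm_eq_abs, ← sq_lt_one_iff_abs_lt_one]
  calc (q * t) ^ 2 = q ^ 2 * t ^ 2 := mul_pow q t 2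
    _ ≤ q ^ 3 * t ^ 2 := by gcongr; norm_num
    _ < 1 := hqt

theorem norm_pow_four_mul_cube_lt_one_of_cube_mul_sq_lt_one {q t : ℝ} (hq : 1 ≤ q)
    (hqt : q ^ 3 * t ^ 2 < 1) : ‖q ^ 4 * t ^ 3‖ < 1 := by
  have hnorm : ‖q ^ 3 * t ^ 2‖ < 1 := by
    rwa [Real.norm_of_nonneg (mul_nonneg (pow_nonneg (zero_le_one.trans hq) 3) (sq_nonneg t))]
  rw [show q ^ 4 * t ^ 3 = q ^ 3 * t ^ 2 * (q * t) by ring, norm_mul]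
  exact mul_lt_one_of_nonneg_of_lt_one_left (norm_nonneg _) hnorm
    (norm_mul_lt_one_of_cube_mul_sq_lt_one hq hqt).le

/-- The computation of I₂ in Lemma 2.4:
    ∑_{X,Y≥1} q^{3X+2Y} t^{3X+2Y-min(X,2Y)}
    = q⁵t⁴(1-q³t³+q³t²-q⁸t⁷)/((1-q²t²)(1-q³t³)(1-q⁸t⁶)). -/
theorem heisenberg_integral_I2 (q t : ℝ) (hq : 1 < q) (ht : 0 < t)
    (hqt : q ^ 3 * t ^ 2 < 1) :
    HasSum
      (fun p : ℕ+ × ℕ+ =>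
        q ^ (3 * ((p.1 : ℕ) : ℤ) + 2 * ((p.2 : ℕ) : ℤ)) *
          t ^ (3 * ((p.1 : ℕ) : ℤ) + 2 * ((p.2 : ℕ) : ℤ) -
            min ((p.1 : ℕ) : ℤ) (2 * ((p.2 : ℕ) : ℤ))))
      (q ^ 5 * t ^ 4 * (1 - q ^ 3 * t ^ 3 + q ^ 3 * t ^ 2 - q ^ 8 * t ^ 7) /
        ((1 - q ^ 2 * t ^ 2) * (1 - q ^ 3 * t ^ 3) * (1 - q ^ 8 * t ^ 6))) :=
  heisenberg_integral_I2_general (norm_mul_lt_one_of_cube_mul_sq_lt_one hq.le hqt)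
    (norm_pow_four_mul_cube_lt_one_of_cube_mul_sq_lt_one hq.le hqt)
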